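/- 2-relative entropy is convex linear. Precisely: let (X, p) be a finite probability space, and for each x ∈ X let ♠^x be a 2-morphism datum with finite sets U_x, V_x, U'_x, V'_x, probability distribution q^x on U_x, channel f_x : U_x ⇝ V_x, functions μ^x : U_x → U'_x and ν^x : V_x → V'_x, channel f'_x : U'_x ⇝ V'_x, stochastic sections s^x : U'_x ⇝ U_x of μ^x and t^x : V'_x ⇝ V_x of ν^x, satisfying ν^x∘f_x = f'_x∘μ^x. Define RE_2(♠^x) = D(q^x, s^x∘μ^x∘q^x) + ∑_{u∈U_x} q^x_u D(f_x^u, (t^x∘f'_x∘μ^x)^u). Form the convex combination ⊕_{x∈X} p_x ♠^x on the disjoint unions ∐_x U_x, ∐_x V_x, ∐_x U'_x, ∐_x V'_x, with distribution (x,u) ↦ p_x q^x_u, channels ⊕_x f_x and ⊕_x f'_x (equal to the x-th channel on the x-th components and 0 between different components), functions ⊕_x μ^x and ⊕_x ν^x acting componentwise, and sections ⊕_x s^x and ⊕_x t^x. Then RE_2( ⊕_{x∈X} p_x ♠^x ) = ∑_{x∈X} p_x RE_2(♠^x), as an identity in [0,∞]. -/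

import Mathlib

open scoped ENNReal BigOperators

/-- A probability distribution on a finite set `X`. -/
def IsDist {X : Type*} [Fintype X] (p : X → ℝ) : Prop :=
  (∀ x, 0 ≤ p x) ∧ ∑ x, p x = 1

/-- A channel from `X` to `Y`; `f y x` is the probability of output `y` given input `x`. -/
def IsChannel {X Y : Type*} [Fintype Y] (f : Y → X → ℝ) : Prop :=
  (∀ y x, 0 ≤ f y x) ∧ ∀ x, ∑ y, f y x = 1

/-- Composite of channels: `(g ∘ f) z x = ∑ y, g z y * f y x`. -/
noncomputable def chComp {X Y Z : Type*} [Fintype Y]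
    (g : Z → Y → ℝ) (f : Y → X → ℝ) : Z → X → ℝ :=
  fun z x => ∑ y, g z y * f y x

/-- The pure (deterministic) channel associated to a function. -/
def pureCh {X Y : Type*} [DecidableEq Y] (φ : X → Y) : Y → X → ℝ :=
  fun y x => if y = φ x then 1 else 0

/-- Pushforward of a distribution along a channel. -/
noncomputable def push {X Y : Type*} [Fintype X] (f : Y → X → ℝ) (p : X → ℝ) : Y → ℝ :=
  fun y => ∑ x, f y x * p x

/-- The identity channel. -/
def idChan {X : Type*} [DecidableEq X] : X → X → ℝ :=
  fun x x' => if x = x' then 1 else 0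

/-- `s : Y ⇝ X` is a stochastic section of `φ : X → Y` if it is a channel and `φ ∘ s = id_Y`. -/
def IsSection {X Y : Type*} [Fintype X] [Fintype Y] [DecidableEq Y]
    (φ : X → Y) (s : X → Y → ℝ) : Prop :=
  IsChannel s ∧ chComp (pureCh φ) s = idChan

open scoped Classical in
/-- Relative entropy `D(p,q) ∈ [0,∞]`, with the conventions `0·log(0/q) = 0` and
`p·log(p/0) = ∞` for `p ≠ 0`. -/
noncomputable def relEnt {X : Type*} [Fintype X] (p q : X → ℝ) : ℝ≥0∞ :=
  if ∀ x, p x ≠ 0 → q x ≠ 0 then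
    ENNReal.ofReal (∑ x, if p x = 0 then 0 else p x * Real.log (p x / q x))
  else ⊤

/-- The direct sum of a family of channels `f x : A x ⇝ B x` over disjoint unions,
equal to `f x` on the `x`-th components and `0` between different components. -/
def dSum {X : Type*} [DecidableEq X] {A B : X → Type*}
    (f : ∀ x, B x → A x → ℝ) : (Σ x, B x) → (Σ x, A x) → ℝ :=
  fun b a => if h : a.1 = b.1 then f b.1 b.2 (h ▸ a.2) else 0

/-!
Direct sums of channels commute with composition, and push a mixture forward to the mixture of the
pushforwards. Hence the first relative entropy compares two mixtures with the same weights `p`: it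
splits over the disjoint union, and `p x` cancels inside the logarithm. As the splitting takes place
in `[0, ∞]`, the real sum over each component has to be nonnegative, which is Gibbs' inequality. In
the conditional term, a column of a direct sum of channels is supported on a single component.
-/

section RelEnt

variable {A B : Type*} [Fintype A] [Fintype B]

lemma relEnt_eq_ofReal {p q : A → ℝ} (hpq : ∀ a, p a ≠ 0 → q a ≠ 0) :
    relEnt p q = ENNReal.ofReal (∑ a, p a * Real.log (p a / q a)) := by
  rw [relEnt, if_pos hpq]
  congr! 2 with a
  split_ifs with h <;> simp [h]

lemma relEnt_eq_top {p q : A → ℝ} {a : A} (hp : p a ≠ 0) (hq : q a = 0) : relEnt p q = ⊤ :=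
  if_neg fun h ↦ h a hp hq

lemma relEnt_const_mul {c : ℝ} (hc : 0 ≤ c) (p q : A → ℝ) :
    relEnt (fun a ↦ c * p a) (fun a ↦ c * q a) = ENNReal.ofReal c * relEnt p q := by
  obtain rfl | hc₀ := hc.eq_or_lt
  · simp [relEnt]
  by_cases hpq : ∀ a, p a ≠ 0 → q a ≠ 0
  · have hcpq (a) (ha : c * p a ≠ 0) : c * q a ≠ 0 :=
      mul_ne_zero hc₀.ne' (hpq a (right_ne_zero_of_mul ha))
    rw [relEnt_eq_ofReal hpq, relEnt_eq_ofReal hcpq, ← ENNReal.ofReal_mul hc, Finset.mul_sum]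
    simp only [mul_div_mul_left _ _ hc₀.ne', mul_assoc]
  · push Not at hpq
    obtain ⟨a, hpa, hqa⟩ := hpq
    rw [relEnt_eq_top hpa hqa, ENNReal.mul_top (by simpa using hc₀)]
    exact relEnt_eq_top (a := a) (mul_ne_zero hc₀.ne' hpa) (by rw [hqa, mul_zero])

lemma relEnt_comp_of_injective {e : A → B} (he : e.Injective) {p : B → ℝ} (q : B → ℝ)
    (hp : ∀ b ∉ Set.range e, p b = 0) : relEnt (p ∘ e) (q ∘ e) = relEnt p q := by
  by_cases hpq : ∀ b, p b ≠ 0 → q b ≠ 0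
  · rw [relEnt_eq_ofReal hpq, relEnt_eq_ofReal (p := p ∘ e) (q := q ∘ e) fun a ↦ hpq (e a)]
    congr 1
    exact Fintype.sum_of_injective e he _ _ (fun b hb ↦ by rw [hp b hb, zero_mul]) fun _ ↦ rfl
  · push Not at hpq
    obtain ⟨b, hpb, hqb⟩ := hpq
    obtain ⟨a, rfl⟩ : b ∈ Set.range e := by_contra fun hb ↦ hpb (hp b hb)
    rw [relEnt_eq_top hpb hqb]
    exact relEnt_eq_top (a := a) hpb hqb

lemma sub_le_mul_log_div {a b : ℝ} (ha : 0 ≤ a) (hb : 0 ≤ b) (hab : a ≠ 0 → b ≠ 0) :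
    a - b ≤ a * Real.log (a / b) := by
  obtain rfl | hb₀ := hb.eq_or_lt
  · simp [not_imp_not.mp hab rfl]
  · have hkl : b * InformationTheory.klFun (a / b) = a * Real.log (a / b) + b - a := by
      rw [InformationTheory.klFun]
      field_simp
    linarith [mul_nonneg hb (InformationTheory.klFun_nonneg (div_nonneg ha hb))]

lemma sum_mul_log_div_nonneg {p q : A → ℝ} (hp : ∀ a, 0 ≤ p a) (hq : ∀ a, 0 ≤ q a)
    (hsum : ∑ a, q a ≤ ∑ a, p a) (hpq : ∀ a, p a ≠ 0 → q a ≠ 0) :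
    0 ≤ ∑ a, p a * Real.log (p a / q a) :=
  calc
    0 ≤ ∑ a, (p a - q a) := by rwa [Finset.sum_sub_distrib, sub_nonneg]
    _ ≤ ∑ a, p a * Real.log (p a / q a) :=
      Finset.sum_le_sum fun a _ ↦ sub_le_mul_log_div (hp a) (hq a) (hpq a)

end RelEnt

section Sigma

variable {X : Type*} [Fintype X] {A : X → Type*} [∀ x, Fintype (A x)]

lemma relEnt_sigma {p q : (Σ x, A x) → ℝ} (hp : ∀ a, 0 ≤ p a) (hq : ∀ a, 0 ≤ q a)
    (hsum : ∀ x, ∑ a, q ⟨x, a⟩ ≤ ∑ a, p ⟨x, a⟩) :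
    relEnt p q = ∑ x, relEnt (fun a ↦ p ⟨x, a⟩) (fun a ↦ q ⟨x, a⟩) := by
  by_cases hpq : ∀ a, p a ≠ 0 → q a ≠ 0
  · rw [relEnt_eq_ofReal hpq, Fintype.sum_sigma, ENNReal.ofReal_sum_of_nonneg fun x _ ↦
      sum_mul_log_div_nonneg (fun a ↦ hp ⟨x, a⟩) (fun a ↦ hq ⟨x, a⟩) (hsum x) fun a ↦ hpq ⟨x, a⟩]
    exact Finset.sum_congr rfl fun x _ ↦ (relEnt_eq_ofReal fun a ↦ hpq ⟨x, a⟩).symm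
  · push Not at hpq
    obtain ⟨⟨x, a⟩, hpa, hqa⟩ := hpq
    rw [relEnt_eq_top hpa hqa]
    exact (ENNReal.sum_eq_top.mpr ⟨x, Finset.mem_univ x, relEnt_eq_top (a := a) hpa hqa⟩).symm

lemma relEnt_sigma_mul {p : X → ℝ} {q r : ∀ x, A x → ℝ} (hp : ∀ x, 0 ≤ p x)
    (hq : ∀ x a, 0 ≤ q x a) (hr : ∀ x a, 0 ≤ r x a) (hsum : ∀ x, ∑ a, r x a ≤ ∑ a, q x a) :
    relEnt (fun a : Σ x, A x ↦ p a.1 * q a.1 a.2) (fun a ↦ p a.1 * r a.1 a.2)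
      = ∑ x, ENNReal.ofReal (p x) * relEnt (q x) (r x) := by
  rw [relEnt_sigma (fun a ↦ mul_nonneg (hp a.1) (hq a.1 a.2))
    (fun a ↦ mul_nonneg (hp a.1) (hr a.1 a.2)) fun x ↦ by
      simpa only [← Finset.mul_sum] using mul_le_mul_of_nonneg_left (hsum x) (hp x)]
  exact Finset.sum_congr rfl fun x _ ↦ relEnt_const_mul (hp x) (q x) (r x)

end Sigma

lemma isChannel_pureCh {A B : Type*} [Fintype B] [DecidableEq B] (φ : A → B) :
    IsChannel (pureCh φ) :=
  ⟨fun b a ↦ by unfold pureCh; positivity, fun a ↦ by simp [pureCh]⟩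

lemma IsDist.push {A B : Type*} [Fintype A] [Fintype B] {f : B → A → ℝ} {q : A → ℝ}
    (hq : IsDist q) (hf : IsChannel f) : IsDist (push f q) := by
  refine ⟨fun b ↦ Finset.sum_nonneg fun a _ ↦ mul_nonneg (hf.1 b a) (hq.1 a), ?_⟩
  simp only [_root_.push]
  rw [Finset.sum_comm]
  simp only [← Finset.sum_mul, hf.2, one_mul, hq.2]

section DirectSum

variable {X : Type*} [DecidableEq X] {A B C : X → Type*}

lemma dSum_same (f : ∀ x, B x → A x → ℝ) (x : X) (b : B x) (a : A x) :
    dSum f ⟨x, b⟩ ⟨x, a⟩ = f x b a := by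
  simp [dSum]

lemma dSum_of_ne (f : ∀ x, B x → A x → ℝ) {x y : X} (hxy : x ≠ y) (b : B y) (a : A x) :
    dSum f ⟨y, b⟩ ⟨x, a⟩ = 0 := by
  simp [dSum, hxy]

lemma pureCh_sigma [∀ x, DecidableEq (B x)] (φ : ∀ x, A x → B x) :
    pureCh (fun a : Σ x, A x ↦ (⟨a.1, φ a.1 a.2⟩ : Σ x, B x)) = dSum fun x ↦ pureCh (φ x) := by
  ext ⟨y, b⟩ ⟨x, a⟩
  obtain rfl | hxy := eq_or_ne x y
  · simp [dSum_same, pureCh]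
  · simp [dSum_of_ne _ hxy, pureCh, hxy.symm]

lemma relEnt_dSum [Fintype X] [∀ x, Fintype (B x)] (f g : ∀ x, B x → A x → ℝ) (x : X) (a : A x) :
    relEnt (fun b ↦ dSum f b ⟨x, a⟩) (fun b ↦ dSum g b ⟨x, a⟩)
      = relEnt (fun b ↦ f x b a) (fun b ↦ g x b a) := by
  have hsupp : ∀ b ∉ Set.range (Sigma.mk x), dSum f b ⟨x, a⟩ = 0 := by
    rintro ⟨y, b⟩ hb
    exact dSum_of_ne f (by rintro rfl; exact hb ⟨b, rfl⟩) b a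
  rw [← relEnt_comp_of_injective sigma_mk_injective _ hsupp]
  simp only [Function.comp_def, dSum_same]

lemma push_dSum_apply [Fintype X] [∀ x, Fintype (A x)] (f : ∀ x, B x → A x → ℝ)
    (r : (Σ x, A x) → ℝ) (y : X) (b : B y) :
    push (dSum f) r ⟨y, b⟩ = push (f y) (fun a ↦ r ⟨y, a⟩) b := by
  have hoff : ∀ x ≠ y, ∑ a, dSum f ⟨y, b⟩ ⟨x, a⟩ * r ⟨x, a⟩ = 0 := fun x hxy ↦ by
    simp only [dSum_of_ne f hxy, zero_mul, Finset.sum_const_zero]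
  simp only [push, Fintype.sum_sigma, Fintype.sum_eq_single y hoff, dSum_same]

lemma push_dSum_mul [Fintype X] [∀ x, Fintype (A x)] (f : ∀ x, B x → A x → ℝ) (p : X → ℝ)
    (q : ∀ x, A x → ℝ) :
    push (dSum f) (fun a ↦ p a.1 * q a.1 a.2) = fun b ↦ p b.1 * push (f b.1) (q b.1) b.2 := by
  ext ⟨y, b⟩
  rw [push_dSum_apply]
  simp only [push, Finset.mul_sum, mul_left_comm]

lemma chComp_dSum [Fintype X] [∀ x, Fintype (B x)] (g : ∀ x, C x → B x → ℝ)
    (f : ∀ x, B x → A x → ℝ) :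
    chComp (dSum g) (dSum f) = dSum fun x ↦ chComp (g x) (f x) := by
  ext ⟨z, c⟩ ⟨x, a⟩
  have hcol : chComp (dSum g) (dSum f) ⟨z, c⟩ ⟨x, a⟩
      = push (g z) (fun b ↦ dSum f ⟨z, b⟩ ⟨x, a⟩) c := push_dSum_apply g _ z c
  rw [hcol]
  obtain rfl | hxz := eq_or_ne x z
  · simp only [dSum_same, push, chComp]
  · simp only [dSum_of_ne _ hxz, push, mul_zero, Finset.sum_const_zero]

end DirectSum

/-- The 2-relative entropy `RE₂` of a square with horizontal channels `f : U ⇝ V` and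
`f' : U' ⇝ V'`, left side `m : U ⇝ U'`, and backward channels `s : U' ⇝ U` and `t : V' ⇝ V`.
The paper takes `m` pure; the right side `V ⇝ V'` does not enter the formula. -/
noncomputable def relEnt2 {U V U' V' : Type*} [Fintype U] [Fintype V] [Fintype U'] [Fintype V']
    (q : U → ℝ) (f : V → U → ℝ) (f' : V' → U' → ℝ) (m : U' → U → ℝ)
    (s : U → U' → ℝ) (t : V → V' → ℝ) : ℝ≥0∞ :=
  relEnt q (push s (push m q))
    + ∑ u, ENNReal.ofReal (q u) *
        relEnt (fun v ↦ f v u) (fun v ↦ chComp t (chComp f' m) v u)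

theorem relEnt2_convex_linear_general {X : Type*} [Fintype X] [DecidableEq X]
    {U V U' V' : X → Type*}
    [∀ x, Fintype (U x)] [∀ x, Fintype (V x)] [∀ x, Fintype (U' x)] [∀ x, Fintype (V' x)]
    (p : X → ℝ) (q : ∀ x, U x → ℝ)
    (f : ∀ x, V x → U x → ℝ) (f' : ∀ x, V' x → U' x → ℝ) (m : ∀ x, U' x → U x → ℝ)
    (s : ∀ x, U x → U' x → ℝ) (t : ∀ x, V x → V' x → ℝ)
    (hp : ∀ x, 0 ≤ p x) (hq : ∀ x, IsDist (q x))
    (_hf : ∀ x, IsChannel (f x)) (_hf' : ∀ x, IsChannel (f' x)) (hm : ∀ x, IsChannel (m x))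
    (hs : ∀ x, IsChannel (s x)) (_ht : ∀ x, IsChannel (t x)) :
    relEnt2 (fun u : Σ x, U x ↦ p u.1 * q u.1 u.2) (dSum f) (dSum f') (dSum m) (dSum s) (dSum t)
      = ∑ x, ENNReal.ofReal (p x) * relEnt2 (q x) (f x) (f' x) (m x) (s x) (t x) := by
  have hr (x) : IsDist (push (s x) (push (m x) (q x))) := ((hq x).push (hm x)).push (hs x)
  have hmarginal : relEnt (fun u : Σ x, U x ↦ p u.1 * q u.1 u.2)
        (push (dSum s) (push (dSum m) fun u ↦ p u.1 * q u.1 u.2))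
      = ∑ x, ENNReal.ofReal (p x) * relEnt (q x) (push (s x) (push (m x) (q x))) := by
    rw [push_dSum_mul, push_dSum_mul s p fun x ↦ push (m x) (q x)]
    exact relEnt_sigma_mul hp (fun x ↦ (hq x).1) (fun x ↦ (hr x).1)
      fun x ↦ ((hr x).2.trans (hq x).2.symm).le
  simp only [relEnt2, hmarginal, chComp_dSum, Fintype.sum_sigma, relEnt_dSum,
    ENNReal.ofReal_mul (hp _), mul_assoc, mul_add, Finset.mul_sum, Finset.sum_add_distrib]

/-- 2-relative entropy is convex linear. -/
theorem relEnt2_convex_linear {X : Type*} [Fintype X] [DecidableEq X]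
    {U V U' V' : X → Type*}
    [∀ x, Fintype (U x)] [∀ x, Fintype (V x)]
    [∀ x, Fintype (U' x)] [∀ x, Fintype (V' x)]
    [∀ x, DecidableEq (U' x)] [∀ x, DecidableEq (V' x)]
    (p : X → ℝ) (q : ∀ x, U x → ℝ)
    (f : ∀ x, V x → U x → ℝ) (f' : ∀ x, V' x → U' x → ℝ)
    (μ : ∀ x, U x → U' x) (ν : ∀ x, V x → V' x)
    (s : ∀ x, U x → U' x → ℝ) (t : ∀ x, V x → V' x → ℝ)
    (hp : IsDist p) (hq : ∀ x, IsDist (q x))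
    (hf : ∀ x, IsChannel (f x)) (hf' : ∀ x, IsChannel (f' x))
    (hs : ∀ x, IsSection (μ x) (s x)) (ht : ∀ x, IsSection (ν x) (t x))
    (hcomm : ∀ x, chComp (pureCh (ν x)) (f x) = chComp (f' x) (pureCh (μ x))) :
    (relEnt (fun u : Σ x, U x => p u.1 * q u.1 u.2)
        (push (dSum s)
          (push (pureCh (fun u : Σ x, U x => (⟨u.1, μ u.1 u.2⟩ : Σ x, U' x)))
            (fun u : Σ x, U x => p u.1 * q u.1 u.2)))
      + ∑ u : Σ x, U x, ENNReal.ofReal (p u.1 * q u.1 u.2) *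
          relEnt (fun v : Σ x, V x => dSum f v u)
            (fun v : Σ x, V x =>
              chComp (dSum t)
                (chComp (dSum f')
                  (pureCh (fun u : Σ x, U x => (⟨u.1, μ u.1 u.2⟩ : Σ x, U' x)))) v u))
      = ∑ x, ENNReal.ofReal (p x) *
          (relEnt (q x) (push (s x) (push (pureCh (μ x)) (q x)))
            + ∑ u, ENNReal.ofReal (q x u) *
                relEnt (fun v => f x v u)
                  (fun v => chComp (t x) (chComp (f' x) (pureCh (μ x))) v u)) := by
  rw [pureCh_sigma]
  exact relEnt2_convex_linear_general p q f f' (fun x ↦ pureCh (μ x)) s t hp.1 hq hf hf'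
    (fun x ↦ isChannel_pureCh (μ x)) (fun x ↦ (hs x).1) fun x ↦ (ht x).1
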